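/- Let A ∈ ℝ^{3×3} be symmetric positive definite with three distinct eigenvalues λ₁ < λ₂ < λ₃ and corresponding unit eigenvectors u₁, u₂, u₃. If R ∈ SO(3) satisfies AR = Rᵀ A, then either R = I₃ or R = R(π, u_i) = -I₃ + 2 u_i u_iᵀ for some i ∈ {1,2,3}. -/

import Mathlib

open Matrix

/-- The hat map `[·]^×` sending `x ∈ ℝ³` to the skew-symmetric matrix with `[x]^× y = x × y`. -/
noncomputable def hat (x : Fin 3 → ℝ) : Matrix (Fin 3) (Fin 3) ℝ :=
  !![0, -x 2, x 1; x 2, 0, -x 0; -x 1, x 0, 0]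

/-- The inverse of the hat map (on skew-symmetric matrices). -/
noncomputable def vex (C : Matrix (Fin 3) (Fin 3) ℝ) : Fin 3 → ℝ :=
  ![C 2 1, C 0 2, C 1 0]

/-- The skew-symmetric projection `P_a(C) = (C - Cᵀ)/2`. -/
noncomputable def Pa (C : Matrix (Fin 3) (Fin 3) ℝ) : Matrix (Fin 3) (Fin 3) ℝ :=
  (1/2 : ℝ) • (C - Cᵀ)

/-- `ψ = vex ∘ P_a`. -/
noncomputable def psi (C : Matrix (Fin 3) (Fin 3) ℝ) : Fin 3 → ℝ :=
  vex (Pa C)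

/-- Membership in `SO(3)`. -/
def IsSO3 (R : Matrix (Fin 3) (Fin 3) ℝ) : Prop :=
  Rᵀ * R = 1 ∧ R.det = 1

/-- Angle-axis (Rodrigues) parameterization `R(θ,u)`. -/
noncomputable def rodrigues (θ : ℝ) (u : Fin 3 → ℝ) : Matrix (Fin 3) (Fin 3) ℝ :=
  1 + Real.sin θ • hat u + (1 - Real.cos θ) • (hat u * hat u)

/-!
If `A * R = Rᵀ * A` with `R` orthogonal, then `A` intertwines `R` with `R⁻¹`, so `A * A`
commutes with `R`. When the squares of the eigenvalues of `A` are distinct, as they are for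
distinct nonnegative eigenvalues, `R` preserves each eigenline of `A`, and an orthogonal map
acts on a line by a sign. The three signs multiply to `det R = 1`, so either all of them are `1`
or exactly one is. In the latter case eigenvectors of `R` with opposite signs are orthogonal, so
`R` is the half-turn about the fixed eigenline.
-/

theorem commute_mul_self_of_semiconjBy_inv {M : Type*} [Monoid M] {a : M} {x : Mˣ}
    (h : SemiconjBy a (x : M) (x⁻¹ : Mˣ)) : Commute (a * a) (x : M) := by
  have h_inv : SemiconjBy a ((x⁻¹ : Mˣ) : M) x := by simpa using h.units_inv_right
  exact h_inv.mul_left h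

section Eigenbasis

variable {ι K V : Type*} [AddCommGroup V]

theorem repr_apply_eq_mul_of_eigenbasis [CommRing K] [Module K V] {f : Module.End K V}
    (b : Module.Basis ι K V) {μ : ι → K} (hf : ∀ i, f (b i) = μ i • b i) (v : V) (j : ι) :
    b.repr (f v) j = μ j * b.repr v j := by
  classical
  have h : b.coord j ∘ₗ f = μ j • b.coord j := b.ext fun i => by
    by_cases hij : i = j <;> simp [hf, hij]
  exact LinearMap.congr_fun h v

theorem eigenspace_eq_span_singleton_of_eigenbasis [CommRing K] [IsDomain K] [Module K V]
    {f : Module.End K V} (b : Module.Basis ι K V) {μ : ι → K} (hf : ∀ i, f (b i) = μ i • b i)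
    (hμ : Function.Injective μ) (i : ι) :
    f.eigenspace (μ i) = Submodule.span K {b i} := by
  refine le_antisymm (fun v hv => ?_) ?_
  · have h_repr (j : ι) (hj : j ≠ i) : b.repr v j = 0 := by
      have h_eig : μ i * b.repr v j = μ j * b.repr v j := by
        rw [← repr_apply_eq_mul_of_eigenbasis b hf, Module.End.mem_eigenspace_iff.mp hv]
        simp
      by_contra h_ne
      exact hj (hμ (mul_right_cancel₀ h_ne h_eig)).symm
    refine Submodule.mem_span_singleton.mpr ⟨b.repr v i, b.ext_elem fun j => ?_⟩
    rcases eq_or_ne j i with rfl | hj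
    · simp
    · simp [h_repr j hj, hj.symm]
  · simpa [Submodule.span_singleton_le_iff_mem] using hf i

theorem exists_apply_eq_smul_of_commute_of_eigenbasis [CommRing K] [IsDomain K] [Module K V]
    {f g : Module.End K V} (hfg : Commute f g) (b : Module.Basis ι K V) {μ : ι → K}
    (hf : ∀ i, f (b i) = μ i • b i) (hμ : Function.Injective μ) (i : ι) :
    ∃ c : K, g (b i) = c • b i := by
  have h_mem : g (b i) ∈ f.eigenspace (μ i) :=
    Module.End.mapsTo_genEigenspace_of_comm hfg (μ i) 1 (Module.End.mem_eigenspace_iff.mpr (hf i))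
  rw [eigenspace_eq_span_singleton_of_eigenbasis b hf hμ, Submodule.mem_span_singleton] at h_mem
  exact h_mem.imp fun _ h => h.symm

theorem det_eq_prod_of_eigenbasis [Fintype ι] [CommRing K] [Module K V] {f : Module.End K V}
    (b : Module.Basis ι K V) {μ : ι → K} (hf : ∀ i, f (b i) = μ i • b i) :
    LinearMap.det f = ∏ i, μ i := by
  classical
  have h_diag : LinearMap.toMatrix b b f = diagonal μ := by
    ext i j
    by_cases hij : i = j <;> simp [LinearMap.toMatrix_apply, hf, hij]
  rw [← LinearMap.det_toMatrix b, h_diag, det_diagonal]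

theorem exists_basis_coe_eq_of_eigenvectors [Fintype ι] [Field K] [Module K V]
    [FiniteDimensional K V] (h_card : Fintype.card ι = Module.finrank K V) {f : Module.End K V}
    {v : ι → V} {μ : ι → K} (hμ : Function.Injective μ) (hf : ∀ i, f.HasEigenvector (μ i) (v i)) :
    ∃ b : Module.Basis ι K V, ⇑b = v :=
  have h_indep := Module.End.eigenvectors_linearIndependent' f μ hμ v hf
  ⟨basisOfLinearIndependentOfCardEqFinrank' v h_indep h_card, by simp⟩

end Eigenbasis

section Orthogonal

variable {n K : Type*} [Fintype n] [DecidableEq n]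

theorem mulVec_dotProduct_mulVec_of_transpose_mul_self [CommSemiring K] {R : Matrix n n K}
    (hR : Rᵀ * R = 1) (v w : n → K) : R *ᵥ v ⬝ᵥ R *ᵥ w = v ⬝ᵥ w := by
  rw [dotProduct_mulVec, ← mulVec_transpose, mulVec_mulVec, hR, one_mulVec]

theorem mul_mul_dotProduct_of_mulVec_eq_smul [CommSemiring K] {R : Matrix n n K}
    (hR : Rᵀ * R = 1) {v w : n → K} {c d : K} (hv : R *ᵥ v = c • v) (hw : R *ᵥ w = d • w) :
    c * d * (v ⬝ᵥ w) = v ⬝ᵥ w := by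
  have h_isom := mulVec_dotProduct_mulVec_of_transpose_mul_self hR v w
  simpa [hv, hw, mul_assoc, mul_left_comm] using h_isom

theorem eq_one_or_eq_neg_one_of_mulVec_eq_smul [CommRing K] [IsDomain K] {R : Matrix n n K}
    (hR : Rᵀ * R = 1) {v : n → K} (hv : v ⬝ᵥ v ≠ 0) {c : K} (h : R *ᵥ v = c • v) :
    c = 1 ∨ c = -1 :=
  mul_self_eq_one_iff.mp <|
    (mul_eq_right₀ hv).mp (mul_mul_dotProduct_of_mulVec_eq_smul hR h h)

theorem dotProduct_eq_zero_of_mulVec_eq_smul [CommRing K] [IsDomain K] {R : Matrix n n K}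
    (hR : Rᵀ * R = 1) {v w : n → K} {c d : K} (hv : R *ᵥ v = c • v) (hw : R *ᵥ w = d • w)
    (hcd : c * d ≠ 1) : v ⬝ᵥ w = 0 := by
  by_contra h_ne
  exact hcd ((mul_eq_right₀ h_ne).mp (mul_mul_dotProduct_of_mulVec_eq_smul hR hv hw))

theorem eq_one_of_forall_mulVec_basis [CommRing K] {R : Matrix n n K} {ι : Type*}
    (b : Module.Basis ι K (n → K)) (h : ∀ i, R *ᵥ b i = b i) : R = 1 :=
  toLin'.injective <| b.ext fun i => by simp [h]

theorem eq_neg_one_add_two_smul_vecMulVec_of_basis [CommRing K] {R : Matrix n n K} {ι : Type*}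
    (b : Module.Basis ι K (n → K)) {i : ι} (h_unit : b i ⬝ᵥ b i = 1)
    (h_orth : ∀ j ≠ i, b i ⬝ᵥ b j = 0) (h_fix : R *ᵥ b i = b i)
    (h_neg : ∀ j ≠ i, R *ᵥ b j = -b j) :
    R = -1 + (2 : K) • vecMulVec (b i) (b i) := by
  have h_apply (v : n → K) :
      (-1 + (2 : K) • vecMulVec (b i) (b i)) *ᵥ v = -v + (2 * (b i ⬝ᵥ v)) • b i := by
    simp [add_mulVec, neg_mulVec, smul_mulVec, vecMulVec_mulVec, smul_smul]
  refine toLin'.injective <| b.ext fun j => ?_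
  rw [toLin'_apply, toLin'_apply, h_apply]
  rcases eq_or_ne j i with rfl | hj
  · rw [h_fix, h_unit, mul_one, two_smul, neg_add_cancel_left]
  · rw [h_neg j hj, h_orth j hj, mul_zero, zero_smul, add_zero]

theorem exists_sign_mulVec_eigenbasis [CommRing K] [IsDomain K] {A R : Matrix n n K}
    (hR : Rᵀ * R = 1) (h : A * R = Rᵀ * A) {ι : Type*} (b : Module.Basis ι K (n → K))
    (hb : ∀ i, b i ⬝ᵥ b i ≠ 0) {μ : ι → K} (hA : ∀ i, A *ᵥ b i = μ i • b i)
    (hμ : Function.Injective fun i => μ i ^ 2) :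
    ∃ ε : ι → ℤˣ, ∀ i, R *ᵥ b i = ((ε i : ℤ) : K) • b i := by
  have h_comm : Commute (A * A) R :=
    commute_mul_self_of_semiconjBy_inv (x := ⟨R, Rᵀ, mul_eq_one_comm.mp hR, hR⟩) h
  have h_sq (i : ι) : toLin' (A * A) (b i) = μ i ^ 2 • b i := by
    rw [toLin'_apply, ← mulVec_mulVec, hA, mulVec_smul, hA, smul_smul, sq]
  have h_sign (i : ι) : ∃ e : ℤˣ, R *ᵥ b i = ((e : ℤ) : K) • b i := by
    obtain ⟨c, hc⟩ := exists_apply_eq_smul_of_commute_of_eigenbasis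
      (h_comm.map (toLinAlgEquiv' (R := K) (n := n))) b h_sq hμ i
    rcases eq_one_or_eq_neg_one_of_mulVec_eq_smul hR (hb i) hc with rfl | rfl
    · exact ⟨1, by simpa using hc⟩
    · exact ⟨-1, by simpa using hc⟩
  exact Classical.skolem.mp h_sign

theorem prod_sign_eq_one_of_det_eq_one [CommRing K] [Nontrivial K] (hK : ringChar K ≠ 2)
    {R : Matrix n n K} (h_det : R.det = 1) {ι : Type*} [Fintype ι]
    (b : Module.Basis ι K (n → K)) {ε : ι → ℤˣ} (hε : ∀ i, R *ᵥ b i = ((ε i : ℤ) : K) • b i) :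
    ∏ i, ε i = 1 := by
  have h_cast : (((∏ i, ε i : ℤˣ) : ℤ) : K) = 1 := by
    rw [← h_det, ← LinearMap.det_toLin', det_eq_prod_of_eigenbasis (f := toLin' R) b hε]
    push_cast
    rfl
  refine (Int.units_eq_one_or _).resolve_right fun h_neg => ?_
  exact Ring.neg_one_ne_one_of_char_ne_two hK (by simpa [h_neg] using h_cast)

end Orthogonal

theorem eq_one_or_exists_forall_ne_eq_neg_one (ε : Fin 3 → ℤˣ) (h : ∏ i, ε i = 1) :
    ε = 1 ∨ ∃ i, ε i = 1 ∧ ∀ j ≠ i, ε j = -1 := by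
  decide +revert

theorem eigenvalue_nonneg_of_posSemidef {n : Type*} [Fintype n] {A : Matrix n n ℝ}
    (hA : A.PosSemidef) {v : n → ℝ} (hv : v ≠ 0) {μ : ℝ} (h : A *ᵥ v = μ • v) : 0 ≤ μ := by
  have h_form : 0 ≤ μ * (v ⬝ᵥ v) := by simpa [h] using hA.dotProduct_mulVec_nonneg v
  exact nonneg_of_mul_nonneg_left h_form (by simpa using dotProduct_star_self_pos_iff.mpr hv)

theorem critical_points_of_weighted_trace_general {K : Type*} [Field K] (hK : ringChar K ≠ 2)
    {A R : Matrix (Fin 3) (Fin 3) K} {μ : Fin 3 → K} {u : Fin 3 → Fin 3 → K}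
    (hA : ∀ i, A *ᵥ u i = μ i • u i) (hu : ∀ i, u i ⬝ᵥ u i = 1)
    (hμ : Function.Injective fun i => μ i ^ 2) (hR : Rᵀ * R = 1) (h_det : R.det = 1)
    (h : A * R = Rᵀ * A) :
    R = 1 ∨ ∃ i, R = -1 + (2 : K) • vecMulVec (u i) (u i) := by
  have h_ne (i : Fin 3) : u i ≠ 0 := fun h_zero => by simpa [h_zero] using hu i
  obtain ⟨b, rfl⟩ := exists_basis_coe_eq_of_eigenvectors (f := toLin' A) (by simp)
    (hμ.of_comp (f := (· ^ 2))) fun i => ⟨Module.End.mem_eigenspace_iff.mpr (hA i), h_ne i⟩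
  obtain ⟨ε, hε⟩ := exists_sign_mulVec_eigenbasis hR h b (fun i => by simp [hu i]) hA hμ
  have h_prod : ∏ i, ε i = 1 := prod_sign_eq_one_of_det_eq_one hK h_det b hε
  rcases eq_one_or_exists_forall_ne_eq_neg_one ε h_prod with rfl | ⟨i, h_pos, h_neg⟩
  · exact Or.inl (eq_one_of_forall_mulVec_basis b fun i => by simpa using hε i)
  · have h_orth (j : Fin 3) (hj : j ≠ i) : b i ⬝ᵥ b j = 0 :=
      dotProduct_eq_zero_of_mulVec_eq_smul hR (hε i) (hε j) <| by
        simpa [h_pos, h_neg j hj] using Ring.neg_one_ne_one_of_char_ne_two hK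
    refine Or.inr ⟨i, eq_neg_one_add_two_smul_vecMulVec_of_basis b (hu i) h_orth ?_ fun j hj => ?_⟩
    · simpa [h_pos] using hε i
    · simpa [h_neg j hj] using hε j

/-- Critical-point characterization: if `A` is symmetric positive definite with
distinct eigenvalues `λ₁ < λ₂ < λ₃` and unit eigenvectors `u i`, and `R ∈ SO(3)`
satisfies `AR = RᵀA`, then `R = I₃` or `R = R(π, uᵢ) = -I₃ + 2 uᵢ uᵢᵀ` for some `i`. -/
theorem critical_points_of_weighted_trace (A : Matrix (Fin 3) (Fin 3) ℝ)
    (hA : A.PosDef) (lam : Fin 3 → ℝ) (u : Fin 3 → (Fin 3 → ℝ))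
    (heig : ∀ i, A *ᵥ u i = lam i • u i)
    (hunit : ∀ i, u i ⬝ᵥ u i = 1)
    (hlt : lam 0 < lam 1 ∧ lam 1 < lam 2)
    (R : Matrix (Fin 3) (Fin 3) ℝ) (hR : IsSO3 R)
    (hcrit : A * R = Rᵀ * A) :
    R = 1 ∨ ∃ i : Fin 3, R = -(1 : Matrix (Fin 3) (Fin 3) ℝ) + (2 : ℝ) • vecMulVec (u i) (u i) := by
  have h_mono : StrictMono lam := Fin.strictMono_iff_lt_succ.mpr <| by
    simpa [Fin.forall_fin_two] using hlt
  have h_nonneg (i : Fin 3) : 0 ≤ lam i :=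
    eigenvalue_nonneg_of_posSemidef hA.posSemidef
      (fun h_zero => by simpa [h_zero] using hunit i) (heig i)
  have h_inj : Function.Injective fun i => lam i ^ 2 := fun i j hij =>
    h_mono.injective ((sq_eq_sq₀ (h_nonneg i) (h_nonneg j)).mp hij)
  exact critical_points_of_weighted_trace_general (by simp [ringChar.eq_zero]) heig hunit h_inj
    hR.1 hR.2 hcrit
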